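/- arXiv:1511.08348 — 2 statements merged into one kernel-verified Lean document; each statement's English description precedes it below -/
import Mathlib

section
/- Let k be a field and let Q be a finite connected quiver without sources or sinks which is not isomorphic to the c-crown for any c ≥ 1. Then for all m, p ≥ 1 with m ≠ p, the linear map D_{m,p} : k(Q_m//Q_p) → k(Q_{m+1}//Q_{p+1}) is injective. -/
/-!
The coefficient of `D x` at a pair `(γ', β')` is `x (γ, β)` if `(γ', β') = (aγ, aβ)`, plus
`± x (γ, β)` if `(γ', β') = (γa, βa)`.  Since there are no sources or sinks, `D x = 0` therefore
forces the two paths of any pair in the support of `x` to share their first and last arrows, and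
the support to be closed under rotation: erase the common arrow at one end, append an arbitrary
common arrow at the other end (`rotClosed_support`).

Say `m < p`, the other case being symmetric, and let `(γ, β)` be in the support, with target `t`.
Rotating `m` times shows that `β` is `γ` followed by a nonempty cycle `β₀` at `t`, and that the
pair formed by `c` and `β₀` followed by `c` is in the support for every path `c` of length `m`
out of `t`.  These two paths share their first arrow, so `c` starts with the first arrow of `β₀`;
as `c` is arbitrary, `t` emits exactly one arrow (`RotClosed.subsingleton_out`).  Rotations move
targets to arbitrary successors and sources to arbitrary predecessors, and the two kinds of
vertices coincide, so by connectedness every vertex is such a `t` (`RotClosed.isCrown`).  A finite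
connected quiver without sources in which every vertex emits exactly one arrow is a crown
(`isCrown_of_unique_out`), contrary to hypothesis.
-/

open Quiver

/-- Pairs of parallel paths: a path `γ` of length `m` and a path `β` of length `p`
with the same source and the same target.  This is the set `Q_m // Q_p`. -/
structure ParPair (V : Type) [Quiver V] (m p : ℕ) where
  src : V
  tgt : V
  γ : Quiver.Path src tgt
  β : Quiver.Path src tgt
  hγ : γ.length = m
  hβ : β.length = p

instance pathFinite (V : Type) [Quiver V] [Fintype V] [∀ a b : V, Fintype (a ⟶ b)]
    (n : ℕ) (a b : V) : Finite {p : Quiver.Path a b // p.length = n} := by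
  induction n generalizing b with
  | zero =>
      have : Subsingleton {p : Quiver.Path a b // p.length = 0} := by
        constructor
        rintro ⟨p, hp⟩ ⟨q, hq⟩
        cases p with
        | nil =>
            cases q with
            | nil => rfl
            | cons q e => simp at hq
        | cons p e => simp at hp
      infer_instance
  | succ n ih =>
      haveI : ∀ c : V, Finite {p : Quiver.Path a c // p.length = n} := ih
      exact Finite.of_surjective
        (fun x : Σ c : V, {p : Quiver.Path a c // p.length = n} × (c ⟶ b) =>
          (⟨x.2.1.1.cons x.2.2, by simp [x.2.1.2]⟩ :
            {p : Quiver.Path a b // p.length = n + 1}))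
        (by
          rintro ⟨p, hp⟩
          cases p with
          | nil => simp at hp
          | cons q e => exact ⟨⟨_, ⟨q, by simpa using hp⟩, e⟩, rfl⟩)

noncomputable instance pathFintype (V : Type) [Quiver V] [Fintype V]
    [∀ a b : V, Fintype (a ⟶ b)] (n : ℕ) (a b : V) :
    Fintype {p : Quiver.Path a b // p.length = n} := Fintype.ofFinite _

/-- The linear map `D_{m,p} : k(Q_m//Q_p) → k(Q_{m+1}//Q_{p+1})` given on basis elements
by `D_{m,p}(γ, β) = Σ_{a} (aγ, aβ) + (−1)^{p+m+1} Σ_{a} (γa, βa)`. -/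
noncomputable def Dmap (k : Type) [Field k] (V : Type) [Quiver V] [Fintype V]
    [∀ a b : V, Fintype (a ⟶ b)] (m p : ℕ) :
    (ParPair V m p →₀ k) →ₗ[k] (ParPair V (m + 1) (p + 1) →₀ k) :=
  Finsupp.lift _ k _ fun x =>
    (∑ c : V, ∑ e : x.tgt ⟶ c,
      Finsupp.single ⟨x.src, c, x.γ.cons e, x.β.cons e, by simp [x.hγ], by simp [x.hβ]⟩ (1 : k))
    + ((-1 : k) ^ (p + m + 1)) •
      (∑ c : V, ∑ e : c ⟶ x.src,
        Finsupp.single ⟨c, x.tgt, (e.toPath).comp x.γ, (e.toPath).comp x.β,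
          by
            have h := x.hγ
            simp only [Quiver.Path.length_comp, Quiver.Hom.toPath,
              Quiver.Path.length_cons, Quiver.Path.length_nil]
            omega,
          by
            have h := x.hβ
            simp only [Quiver.Path.length_comp, Quiver.Hom.toPath,
              Quiver.Path.length_cons, Quiver.Path.length_nil]
            omega⟩ (1 : k))

/-- The diagonal element `Σ_{γ ∈ Q_m} (γ, γ)` of `k(Q_m//Q_m)`. -/
noncomputable def diagElem (k : Type) [Field k] (V : Type) [Quiver V] [Fintype V]
    [∀ a b : V, Fintype (a ⟶ b)] (m : ℕ) : ParPair V m m →₀ k :=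
  ∑ a : V, ∑ b : V, ∑ γ : {q : Quiver.Path a b // q.length = m},
    Finsupp.single ⟨a, b, γ.1, γ.1, γ.2, γ.2⟩ (1 : k)

/-- The `c`-crown quiver structure on `ZMod c`: exactly one arrow `i ⟶ i + 1`. -/
instance crownQuiver (c : ℕ) : Quiver (ZMod c) := ⟨fun i j => PLift (i + 1 = j)⟩

/-- `Q` is isomorphic to the `c`-crown for some `c ≥ 1`: there are bijections between the
vertices (resp. the arrows) commuting with the source and target maps. -/
def IsCrown (V : Type) [Quiver V] : Prop :=
  ∃ c : ℕ, 1 ≤ c ∧ ∃ σ : V ≃ ZMod c, ∀ a b : V, Nonempty ((a ⟶ b) ≃ (σ a ⟶ σ b))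

/-- `Q` is connected: it is nonempty and the underlying undirected graph is connected. -/
def QuiverConnected (V : Type) [Quiver V] : Prop :=
  Nonempty V ∧ Subsingleton (Quiver.WeaklyConnectedComponent V)

/-- `Q` has no sources and no sinks: every vertex has an incoming and an outgoing arrow. -/
def NoSourcesOrSinks (V : Type) [Quiver V] : Prop :=
  ∀ v : V, (∃ u : V, Nonempty (u ⟶ v)) ∧ (∃ w : V, Nonempty (v ⟶ w))

/-! ### Paths and their first arrows -/

section Paths

variable {V : Type} [Quiver V]

/-- A nonempty path determines its first arrow and the rest of the path.  The three pieces are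
bundled in a sigma type because the intermediate vertices are not known to agree beforehand. -/
lemma toPath_comp_inj {s t c : V} {b : s ⟶ c} {q : Path c t} :
    ∀ {c' : V} {b' : s ⟶ c'} {q' : Path c' t}, b.toPath.comp q = b'.toPath.comp q' →
      (⟨c, b, q⟩ : Σ c, (s ⟶ c) × Path c t) = ⟨c', b', q'⟩ := by
  induction q with
  | nil =>
    intro c' b' q' h
    cases q' with
    | nil =>
      simp only [Path.comp_nil, Hom.toPath] at h
      cases h
      rfl
    | cons q' e' =>
      have := congrArg Path.length h
      simp [Hom.toPath] at this
  | cons q e ih =>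
    intro c' b' q' h
    cases q' with
    | nil =>
      have := congrArg Path.length h
      simp [Hom.toPath] at this
    | cons q' e' =>
      rw [Path.comp_cons, Path.comp_cons] at h
      obtain rfl := Path.obj_eq_of_cons_eq_cons h
      obtain rfl := eq_of_heq (Path.hom_heq_of_cons_eq_cons h)
      have := ih (eq_of_heq (Path.heq_of_cons_eq_cons h))
      cases this
      rfl

lemma exists_path_from (hns : NoSourcesOrSinks V) (n : ℕ) (v : V) :
    ∃ (u : V) (c : Path v u), c.length = n := by
  induction n with
  | zero => exact ⟨v, .nil, rfl⟩
  | succ n ih =>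
    obtain ⟨u, c, hc⟩ := ih
    obtain ⟨w, ⟨e⟩⟩ := (hns u).2
    exact ⟨w, c.cons e, by simp [hc]⟩

lemma exists_path_to (hns : NoSourcesOrSinks V) (n : ℕ) (v : V) :
    ∃ (u : V) (c : Path u v), c.length = n := by
  induction n with
  | zero => exact ⟨v, .nil, rfl⟩
  | succ n ih =>
    obtain ⟨u, c, hc⟩ := ih
    obtain ⟨w, ⟨e⟩⟩ := (hns u).1
    exact ⟨w, e.toPath.comp c, by simp [hc, Hom.toPath, add_comm]⟩

/-- In a connected quiver, a nonempty set of vertices closed under successors and predecessors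
contains every vertex. -/
lemma mem_of_connected (hconn : QuiverConnected V) (S : Set V) {v : V} (hv : v ∈ S)
    (hS : ∀ {a b : V}, (a ⟶ b) → (a ∈ S ↔ b ∈ S)) (w : V) : w ∈ S := by
  have h := hconn.2
  have := (WeaklyConnectedComponent.eq v w).1 (Subsingleton.elim _ _)
  obtain ⟨q⟩ := this
  have key : ∀ (w : Symmetrify V), @Path (Symmetrify V) _ v w → w ∈ S := by
    intro w q
    induction q with
    | nil => exact hv
    | cons q e ih =>
      rcases e with e | e
      · exact (hS e).1 ih
      · exact (hS e).2 ih
  exact key w q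

end Paths

/-! ### Recognising crowns -/

/-- A finite connected quiver without sources in which every vertex emits exactly one arrow is a
crown: the successor map is surjective, hence a permutation, and by connectedness it has a
single orbit. -/
lemma isCrown_of_unique_out (V : Type) [Quiver V] [Fintype V]
    (hconn : QuiverConnected V) (hns : NoSourcesOrSinks V)
    (huniq : ∀ v : V, Subsingleton (Σ w, v ⟶ w)) : IsCrown V := by
  choose f hf using fun v => (hns v).2
  have hsucc : ∀ {a b : V}, (a ⟶ b) → b = f a := by
    intro a b e
    have := huniq a
    exact congrArg Sigma.fst (Subsingleton.elim (⟨b, e⟩ : Σ w, a ⟶ w) ⟨f a, (hf a).some⟩)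
  have hsurj : Function.Surjective f := by
    intro v
    obtain ⟨u, ⟨e⟩⟩ := (hns v).1
    exact ⟨u, (hsucc e).symm⟩
  let g : Equiv.Perm V := Equiv.ofBijective f (Finite.surjective_iff_bijective.1 hsurj)
  have hg : ∀ v, g v = f v := fun v => rfl
  obtain ⟨v₀⟩ := hconn.1
  have horb : ∀ w, w ∈ MulAction.orbit (Subgroup.zpowers g) v₀ := by
    refine mem_of_connected hconn _ (MulAction.mem_orbit_self v₀) ?_
    intro a b e
    have hb : b = (⟨g, Subgroup.mem_zpowers g⟩ : Subgroup.zpowers g) • a := hsucc e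
    rw [hb, ← MulAction.orbit_eq_iff, ← MulAction.orbit_eq_iff, MulAction.orbit_smul]
  let τ := MulAction.orbitZPowersEquiv g v₀
  let σ : V ≃ ZMod (Function.minimalPeriod (g • ·) v₀) :=
    (Equiv.subtypeUnivEquiv horb).symm.trans τ
  have hσ : ∀ i, σ.symm (i + 1) = f (σ.symm i) := by
    intro i
    obtain ⟨n, rfl⟩ := ZMod.intCast_surjective i
    have h1 : ∀ n : ℤ, σ.symm (n : ZMod _) = (g ^ n) v₀ := by
      intro n
      change ((τ.symm (n : ZMod _) : MulAction.orbit (Subgroup.zpowers g) v₀) : V) = _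
      rw [MulAction.orbitZPowersEquiv_symm_apply']
      rfl
    have h2 := h1 (n + 1)
    push_cast at h2
    rw [h2, h1, add_comm, zpow_add, zpow_one]
    rfl
  refine ⟨_, Nat.pos_of_ne_zero (MulAction.minimalPeriod_pos g v₀).out, σ, fun a b => ?_⟩
  have hab : σ a + 1 = σ b ↔ b = f a := by
    rw [← σ.symm.injective.eq_iff, hσ]
    simp [eq_comm]
  by_cases h : b = f a
  · subst h
    have : Subsingleton (a ⟶ f a) := ⟨fun e e' => by
      have := huniq a
      have h := Subsingleton.elim (⟨f a, e⟩ : Σ w, a ⟶ w) ⟨f a, e'⟩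
      simpa using h⟩
    exact ⟨⟨fun _ => ⟨hab.2 rfl⟩, fun _ => (hf a).some, fun _ => Subsingleton.elim _ _,
      fun _ => rfl⟩⟩
  · exact ⟨⟨fun e => (h (hsucc e)).elim, fun e => (h (hab.1 e.down)).elim,
      fun e => (h (hsucc e)).elim, fun e => (h (hab.1 e.down)).elim⟩⟩

/-! ### Families of parallel pairs closed under rotation -/

section Rotation

variable {V : Type} [Quiver V]

/-- A family `N` of pairs of parallel paths of lengths `m` and `p` is *rotation closed* if the two
paths of each of its members have a common first arrow and a common last arrow, and if erasing
the common first (resp. last) arrow and then appending any common arrow at the target (resp.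
source) gives again a member of `N`. -/
structure RotClosed (m p : ℕ) (N : ∀ {s t : V}, Path s t → Path s t → Prop) : Prop where
  len_left : ∀ {s t : V} {γ β : Path s t}, N γ β → γ.length = m
  len_right : ∀ {s t : V} {γ β : Path s t}, N γ β → β.length = p
  fwd : ∀ {s t : V} {γ β : Path s t}, N γ β → ∃ (c : V) (b : s ⟶ c) (γ₁ β₁ : Path c t),
    γ = b.toPath.comp γ₁ ∧ β = b.toPath.comp β₁ ∧
      ∀ (d : V) (a : t ⟶ d), N (γ₁.cons a) (β₁.cons a)
  bwd : ∀ {s t : V} {γ β : Path s t}, N γ β → ∃ (c : V) (a : c ⟶ t) (γ₁ β₁ : Path s c),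
    γ = γ₁.cons a ∧ β = β₁.cons a ∧
      ∀ (d : V) (b : d ⟶ s), N (b.toPath.comp γ₁) (b.toPath.comp β₁)

lemma RotClosed.swap {m p : ℕ} {N : ∀ {s t : V}, Path s t → Path s t → Prop}
    (h : RotClosed m p N) : RotClosed p m (fun {s t : V} (γ β : Quiver.Path s t) => N β γ) where
  len_left := h.len_right
  len_right := h.len_left
  fwd hN := by
    obtain ⟨c, b, γ₁, β₁, h1, h2, h3⟩ := h.fwd hN
    exact ⟨c, b, β₁, γ₁, h2, h1, h3⟩
  bwd hN := by
    obtain ⟨c, b, γ₁, β₁, h1, h2, h3⟩ := h.bwd hN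
    exact ⟨c, b, β₁, γ₁, h2, h1, h3⟩

variable {m p : ℕ} {N : ∀ {s t : V}, Path s t → Path s t → Prop}

/-- Rotating forward along `c`, as many times as `γa` has arrows. -/
lemma RotClosed.rotate (h : RotClosed m p N) (hmp : m < p) {s x : V} (γa : Path s x) :
    ∀ {t u : V} (γb : Path x t) (β : Path s t) (c : Path t u), c.length = γa.length →
      N (γa.comp γb) β → ∃ β' : Path x t, β = γa.comp β' ∧ N (γb.comp c) (β'.comp c) := by
  induction γa with
  | nil =>
    intro t u γb β c hc hN
    cases c with
    | nil => exact ⟨β, by simp, by simpa using hN⟩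
    | cons c a => simp at hc
  | cons γa e ih =>
    intro t u γb β c hc hN
    cases c with
    | nil => simp at hc
    | cons c a =>
      have hN' : N (γa.comp (e.toPath.comp γb)) β := by
        rwa [← Path.comp_assoc, Path.comp_toPath_eq_cons]
      obtain ⟨β₂, rfl, h2⟩ := ih (e.toPath.comp γb) β c (by simpa using hc) hN'
      have hl1 := h.len_left hN'
      have hl2 := h.len_right hN'
      simp only [Path.length_comp, Path.length_toPath] at hl1 hl2
      -- `β₂` is nonempty because `m < p`
      obtain ⟨y, b₂, β₃, rfl, -⟩ := (Path.length_ne_zero_iff_eq_comp β₂).1 (by omega)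
      obtain ⟨z, b, γ₁, β₁, h3, h4, h5⟩ := h.fwd h2
      rw [Path.comp_assoc] at h3 h4
      cases toPath_comp_inj h3
      cases toPath_comp_inj h4
      refine ⟨β₃, ?_, h5 _ a⟩
      rw [← Path.comp_assoc, Path.comp_toPath_eq_cons]

/-- Rotating backward along `c`, as many times as `γb` has arrows. -/
lemma RotClosed.rotate_back (h : RotClosed m p N) {x t : V} (γb : Path x t) :
    ∀ {s u : V} (γa : Path s x) (β : Path s t) (c : Path u s), c.length = γb.length →
      N (γa.comp γb) β → ∃ β' : Path u x, N (c.comp γa) β' := by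
  induction γb with
  | nil =>
    intro s u γa β c hc hN
    cases c with
    | nil => exact ⟨β, by simpa using hN⟩
    | cons c a => simp at hc
  | cons γb e ih =>
    intro s u γa β c hc hN
    cases c with
    | nil => simp at hc
    | cons c b =>
      obtain ⟨z, a, γ₁, β₁, h3, -, h5⟩ := h.bwd hN
      rw [Path.comp_cons] at h3
      cases h3
      have h6 := h5 _ b
      rw [← Path.comp_assoc] at h6
      obtain ⟨β', h7⟩ := ih (b.toPath.comp γa) _ c (by simpa using hc) h6
      rw [← Path.comp_assoc, Path.comp_toPath_eq_cons] at h7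
      exact ⟨β', h7⟩

/-- At the target `t` of a member `(γ, β)` one has `β = γ.comp β₀` for a nonempty cycle `β₀` at
`t`, and rotating `γ` to an arbitrary path `c` out of `t` gives the member `(c, β₀.comp c)`.  The
common first arrow is the first arrow of `β₀`, so every arrow out of `t` is that one. -/
lemma RotClosed.subsingleton_out (hns : NoSourcesOrSinks V) (h : RotClosed m p N) (hm : 1 ≤ m)
    (hmp : m < p) {s t : V} {γ β : Path s t} (hN : N γ β) : Subsingleton (Σ w, t ⟶ w) := by
  obtain ⟨n, rfl⟩ : ∃ n, m = n + 1 := ⟨m - 1, by omega⟩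
  have hN' : N (γ.comp .nil) β := by simpa using hN
  have hlγ := h.len_left hN
  have hlβ := h.len_right hN
  have key : ∀ (w : V) (a : t ⟶ w), ∃ q : Path w t, β = γ.comp (a.toPath.comp q) := by
    intro w a
    obtain ⟨u, c, hc⟩ := exists_path_from hns n w
    obtain ⟨β₀, rfl, h2⟩ := h.rotate hmp γ .nil β (a.toPath.comp c)
      (by simp [hc, hlγ, add_comm]) hN'
    rw [Path.length_comp] at hlβ
    obtain ⟨y, b₂, q, rfl, -⟩ := (Path.length_ne_zero_iff_eq_comp β₀).1 (by omega)
    obtain ⟨z, b, γ₁, β₁, h3, h4, -⟩ := h.fwd h2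
    rw [Path.nil_comp] at h3
    rw [Path.comp_assoc] at h4
    cases toPath_comp_inj h3
    cases toPath_comp_inj h4
    exact ⟨q, rfl⟩
  constructor
  rintro ⟨w, a⟩ ⟨w', a'⟩
  obtain ⟨q, hq⟩ := key w a
  obtain ⟨q', hq'⟩ := key w' a'
  cases toPath_comp_inj (Path.comp_injective_right γ (hq.symm.trans hq'))
  rfl

/-- A nonempty rotation closed family exists only on a crown.  The vertices that occur as targets
of members coincide with those that occur as sources; the former are closed under successors and
the latter under predecessors, so by connectedness every vertex is a target. -/
lemma RotClosed.isCrown [Fintype V] (hconn : QuiverConnected V) (hns : NoSourcesOrSinks V)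
    (h : RotClosed m p N) (hm : 1 ≤ m) (hmp : m < p) {s t : V} {γ β : Path s t} (hN : N γ β) :
    IsCrown V := by
  let T : Set V := {t | ∃ (s : V) (γ β : Path s t), N γ β}
  let S : Set V := {s | ∃ (t : V) (γ β : Path s t), N γ β}
  have hTS : T ⊆ S := by
    rintro t ⟨s, γ, β, hN⟩
    obtain ⟨u, c, hc⟩ := exists_path_from hns γ.length t
    obtain ⟨β₀, -, h2⟩ := h.rotate hmp γ .nil β c hc (by simpa using hN)
    exact ⟨u, _, _, h2⟩
  have hST : S ⊆ T := by
    rintro s ⟨t, γ, β, hN⟩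
    obtain ⟨u, c, hc⟩ := exists_path_to hns γ.length s
    obtain ⟨β₀, h2⟩ := h.rotate_back γ .nil β c hc (by simpa using hN)
    exact ⟨u, _, _, h2⟩
  have hall : ∀ w, w ∈ T := by
    refine mem_of_connected hconn T ⟨s, γ, β, hN⟩ ?_
    intro a b e
    constructor
    · rintro ⟨s, γ, β, hN⟩
      obtain ⟨c, -, γ₁, β₁, -, -, h3⟩ := h.fwd hN
      exact ⟨c, _, _, h3 b e⟩
    · intro hb
      obtain ⟨t, γ, β, hN⟩ := hTS hb
      obtain ⟨c, -, γ₁, β₁, -, -, h3⟩ := h.bwd hN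
      exact hST ⟨c, _, _, h3 a e⟩
  refine isCrown_of_unique_out V hconn hns fun v => ?_
  obtain ⟨s, γ, β, hN⟩ := hall v
  exact h.subsingleton_out hns hm hmp hN

end Rotation

/-! ### The coefficients of `D x` -/

section Coefficients

variable {V : Type} [Quiver V] {m p : ℕ}

/-- The pair `(aγ, aβ)` obtained by appending a common arrow at the target. -/
def ParPair.snoc (w : Σ x : ParPair V m p, Σ c, x.tgt ⟶ c) : ParPair V (m + 1) (p + 1) :=
  ⟨w.1.src, w.2.1, w.1.γ.cons w.2.2, w.1.β.cons w.2.2, by simp [w.1.hγ], by simp [w.1.hβ]⟩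

/-- The pair `(γa, βa)` obtained by appending a common arrow at the source. -/
def ParPair.precomp (w : Σ x : ParPair V m p, Σ c, c ⟶ x.src) : ParPair V (m + 1) (p + 1) :=
  ⟨w.2.1, w.1.tgt, w.2.2.toPath.comp w.1.γ, w.2.2.toPath.comp w.1.β,
    by simp [w.1.hγ, add_comm], by simp [w.1.hβ, add_comm]⟩

lemma ParPair.snoc_injective :
    Function.Injective (ParPair.snoc : (Σ x : ParPair V m p, Σ c, x.tgt ⟶ c) → _) := by
  rintro ⟨⟨s, t, γ, β, hγ, hβ⟩, c, e⟩ ⟨⟨s', t', γ', β', hγ', hβ'⟩, c', e'⟩ h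
  simp only [ParPair.snoc, ParPair.mk.injEq] at h
  obtain ⟨rfl, rfl, h1, h2⟩ := h
  cases eq_of_heq h1
  cases eq_of_heq h2
  rfl

lemma ParPair.precomp_injective :
    Function.Injective (ParPair.precomp : (Σ x : ParPair V m p, Σ c, c ⟶ x.src) → _) := by
  rintro ⟨⟨s, t, γ, β, hγ, hβ⟩, c, e⟩ ⟨⟨s', t', γ', β', hγ', hβ'⟩, c', e'⟩ h
  simp only [ParPair.precomp, ParPair.mk.injEq] at h
  obtain ⟨rfl, rfl, h1, h2⟩ := h
  cases toPath_comp_inj (eq_of_heq h1)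
  cases toPath_comp_inj (eq_of_heq h2)
  rfl

/-- If `g` is injective, the coefficient at `g ⟨i, w⟩` of the image of `x` under
`i ↦ ∑ w, g ⟨i, w⟩` is the coefficient of `x` at `i`. -/
lemma sum_single_apply_of_injective {k ι κ : Type*} [Field k] {F : ι → Type*} [∀ i, Fintype (F i)]
    {g : (Σ i, F i) → κ} (hg : Function.Injective g) (x : ι →₀ k) (i : ι) (w : F i) :
    (x.sum fun j r => r • ∑ v : F j, Finsupp.single (g ⟨j, v⟩) (1 : k)) (g ⟨i, w⟩) = x i := by
  classical
  rw [Finsupp.sum_apply]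
  refine (Finsupp.sum_eq_single i ?_ ?_).trans ?_
  · intro j _ hj
    simp only [Finsupp.smul_apply, Finsupp.finsetSum_apply, Finsupp.single_apply, hg.eq_iff]
    simp [hj]
  · simp
  · simp [Finsupp.single_apply, hg.eq_iff]

lemma sum_single_apply_of_notMem {k ι κ : Type*} [Field k] {F : ι → Type*} [∀ i, Fintype (F i)]
    {g : (Σ i, F i) → κ} (x : ι →₀ k) (y : κ) (hy : y ∉ Set.range g) :
    (x.sum fun j r => r • ∑ v : F j, Finsupp.single (g ⟨j, v⟩) (1 : k)) y = 0 := by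
  classical
  rw [Finsupp.sum_apply]
  refine Finset.sum_eq_zero fun j _ => ?_
  have : ∀ v : F j, g ⟨j, v⟩ ≠ y := fun v hv => hy ⟨_, hv⟩
  simp [this]

variable {k : Type} [Field k] [Fintype V] [∀ a b : V, Fintype (a ⟶ b)]

lemma Dmap_eq (x : ParPair V m p →₀ k) : Dmap k V m p x =
    (x.sum fun z r => r • ∑ v, Finsupp.single (ParPair.snoc ⟨z, v⟩) (1 : k)) +
    ((-1 : k) ^ (p + m + 1)) •
      (x.sum fun z r => r • ∑ v, Finsupp.single (ParPair.precomp ⟨z, v⟩) (1 : k)) := by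
  rw [Dmap, Finsupp.lift_apply, Finsupp.smul_sum, ← Finsupp.sum_add]
  refine Finsupp.sum_congr fun z _ => ?_
  rw [smul_add, smul_comm, Fintype.sum_sigma, Fintype.sum_sigma]
  rfl

/-- The support of an element of the kernel of `D` is rotation closed.  If `γ` and `β` had
different first arrows, `(aγ, aβ)` would have coefficient `x (γ, β)` in `D x`; if both start
with `b`, its coefficient is the sum of `x (γ, β)` and, up to sign, the value of `x` at the
rotated pair. -/
lemma rotClosed_support (hns : NoSourcesOrSinks V) (hm : 1 ≤ m) (hp : 1 ≤ p)
    (x : ParPair V m p →₀ k) (hx : Dmap k V m p x = 0) :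
    RotClosed m p (fun {s t : V} (γ β : Quiver.Path s t) =>
      ∃ (hγ : γ.length = m) (hβ : β.length = p), x ⟨s, t, γ, β, hγ, hβ⟩ ≠ 0) where
  len_left := fun ⟨h, _⟩ => h
  len_right := fun ⟨_, h, _⟩ => h
  fwd := by
    rintro s t γ β ⟨hγ, hβ, hne⟩
    obtain ⟨c, b, γ₁, rfl, -⟩ := (Path.length_ne_zero_iff_eq_comp γ).1 (by omega)
    obtain ⟨c', b', β₁, rfl, -⟩ := (Path.length_ne_zero_iff_eq_comp β).1 (by omega)
    by_cases hb : (⟨c, b⟩ : Σ c, s ⟶ c) = ⟨c', b'⟩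
    · cases hb
      refine ⟨c, b, γ₁, β₁, rfl, rfl, fun d a => ?_⟩
      have h1 : (γ₁.cons a).length = m := by
        rw [← hγ]; simp [add_comm]
      have h2 : (β₁.cons a).length = p := by
        rw [← hβ]; simp [add_comm]
      refine ⟨h1, h2, fun h0 => hne ?_⟩
      have hD := DFunLike.congr_fun hx (ParPair.snoc ⟨⟨s, t, _, _, hγ, hβ⟩, d, a⟩)
      rw [Dmap_eq, Finsupp.add_apply, Finsupp.smul_apply,
        sum_single_apply_of_injective ParPair.snoc_injective,
        show ParPair.snoc ⟨⟨s, t, _, _, hγ, hβ⟩, d, a⟩ =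
          ParPair.precomp ⟨⟨c, d, _, _, h1, h2⟩, s, b⟩ from rfl,
        sum_single_apply_of_injective ParPair.precomp_injective, h0] at hD
      simpa using hD
    · refine (hne ?_).elim
      obtain ⟨d, ⟨a⟩⟩ := (hns t).2
      have hD := DFunLike.congr_fun hx (ParPair.snoc ⟨⟨s, t, _, _, hγ, hβ⟩, d, a⟩)
      rw [Dmap_eq, Finsupp.add_apply, Finsupp.smul_apply,
        sum_single_apply_of_injective ParPair.snoc_injective,
        sum_single_apply_of_notMem] at hD
      · simpa using hD
      rintro ⟨⟨⟨s', t', γ', β', _, _⟩, u, e⟩, h⟩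
      simp only [ParPair.snoc, ParPair.precomp, ParPair.mk.injEq] at h
      obtain ⟨rfl, rfl, h1, h2⟩ := h
      have h1 := eq_of_heq h1
      have h2 := eq_of_heq h2
      rw [← Path.comp_cons] at h1 h2
      cases toPath_comp_inj h1
      cases toPath_comp_inj h2
      exact hb rfl
  bwd := by
    rintro s t γ β ⟨hγ, hβ, hne⟩
    obtain ⟨c, γ₁, a, rfl⟩ := (Path.length_ne_zero_iff_eq_cons γ).1 (by omega)
    obtain ⟨c', β₁, a', rfl⟩ := (Path.length_ne_zero_iff_eq_cons β).1 (by omega)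
    by_cases hb : (⟨c, a⟩ : Σ c, c ⟶ t) = ⟨c', a'⟩
    · cases hb
      refine ⟨c, a, γ₁, β₁, rfl, rfl, fun d b => ?_⟩
      have h1 : (b.toPath.comp γ₁).length = m := by
        rw [← hγ]; simp [add_comm]
      have h2 : (b.toPath.comp β₁).length = p := by
        rw [← hβ]; simp [add_comm]
      refine ⟨h1, h2, fun h0 => hne ?_⟩
      have hD := DFunLike.congr_fun hx (ParPair.precomp ⟨⟨s, t, _, _, hγ, hβ⟩, d, b⟩)
      rw [Dmap_eq, Finsupp.add_apply, Finsupp.smul_apply,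
        sum_single_apply_of_injective ParPair.precomp_injective,
        show ParPair.precomp ⟨⟨s, t, _, _, hγ, hβ⟩, d, b⟩ =
          ParPair.snoc ⟨⟨d, c, _, _, h1, h2⟩, t, a⟩ from rfl,
        sum_single_apply_of_injective ParPair.snoc_injective, h0] at hD
      simpa using hD
    · refine (hne ?_).elim
      obtain ⟨d, ⟨b⟩⟩ := (hns s).1
      have hD := DFunLike.congr_fun hx (ParPair.precomp ⟨⟨s, t, _, _, hγ, hβ⟩, d, b⟩)
      rw [Dmap_eq, Finsupp.add_apply, Finsupp.smul_apply,
        sum_single_apply_of_injective ParPair.precomp_injective,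
        sum_single_apply_of_notMem] at hD
      · simpa using hD
      rintro ⟨⟨⟨s', t', γ', β', _, _⟩, u, e⟩, h⟩
      simp only [ParPair.snoc, ParPair.precomp, ParPair.mk.injEq] at h
      obtain ⟨rfl, rfl, h1, h2⟩ := h
      cases eq_of_heq h1
      cases eq_of_heq h2
      exact hb rfl

end Coefficients

/-- for a field `k` and a finite connected quiver `Q` without sources or sinks
which is not a crown, for all `m, p ≥ 1` with `m ≠ p` the linear map
`D_{m,p} : k(Q_m//Q_p) → k(Q_{m+1}//Q_{p+1})` is injective. -/
theorem D_injective (k : Type) [Field k] (V : Type) [Quiver V] [Fintype V]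
    [∀ a b : V, Fintype (a ⟶ b)]
    (hconn : QuiverConnected V) (hns : NoSourcesOrSinks V) (hcrown : ¬ IsCrown V)
    (m p : ℕ) (hm : 1 ≤ m) (hp : 1 ≤ p) (hmp : m ≠ p) :
    Function.Injective ⇑(Dmap k V m p) := by
  rw [injective_iff_map_eq_zero]
  intro x hx
  by_contra hne
  obtain ⟨⟨s, t, γ, β, hγ, hβ⟩, hz⟩ := Finsupp.ne_iff.1 hne
  have hrot := rotClosed_support hns hm hp x hx
  refine hcrown ?_
  rcases lt_or_gt_of_ne hmp with h | h
  · exact hrot.isCrown hconn hns hm h ⟨hγ, hβ, hz⟩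
  · exact hrot.swap.isCrown hconn hns hp h (γ := β) (β := γ) ⟨hγ, hβ, hz⟩
end

section
/- Let Q be a finite connected quiver without sources or sinks and let m ≥ 1. Define a relation ∼ on the set Q_m of paths of length m by: γ ∼ γ′ if and only if there exist arrows α, β ∈ Q₁ and a path p of length m−1 such that γ is the concatenation in which α is traversed first followed by p, and γ′ is the concatenation in which p is traversed first followed by β. Then the equivalence relation generated by ∼ relates any two paths of length m: for all γ, γ′ ∈ Q_m, γ and γ′ lie in the same equivalence class. -/
/-!
Paths are written in order of traversal.  Sliding a window of length `m` along a path `p * q`,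
where `p` ends and `q` starts at the same
vertex and both have length `m`, shows that `p` and `q` are equivalent (`eqv_of_tgt_eq_src`).
As there are no sources, some path of length `m` ends at any given vertex `v`, so all paths
starting at `v` are equivalent (`eqv_of_src_eq`).  For an arrow `α : u ⟶ v` and a path `p` of
length `m - 1` starting at `v`, extended by an arrow `β` (there are no sinks), `α * p ∼ p * β`
links the paths starting at `u` to those starting at `v` (`eqv_of_arrow`).  Connectedness then
identifies the classes attached to all vertices.
-/

open Quiver

/-- A path of length `m` in `Q`, together with its endpoints. -/
structure APath (V : Type) [Quiver V] (m : ℕ) where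
  src : V
  tgt : V
  path : Quiver.Path src tgt
  hlen : path.length = m

/-- The relation `∼` on paths of length `m`: `x ∼ y` iff there are arrows `α, β` and a
path `p` of length `m − 1` such that `x` is "`α` traversed first, followed by `p`" and
`y` is "`p` traversed first, followed by `β`". -/
def SwapRel (V : Type) [Quiver V] (m : ℕ) (x y : APath V m) : Prop :=
  ∃ (u v : V) (p : Quiver.Path u v) (x₀ : V) (α : x₀ ⟶ u) (y₀ : V) (β : v ⟶ y₀)
    (hp : p.length + 1 = m),
    x = ⟨x₀, v, (α.toPath).comp p,
          by
            simp only [Quiver.Path.length_comp, Quiver.Hom.toPath,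
              Quiver.Path.length_cons, Quiver.Path.length_nil]
            omega⟩
      ∧ y = ⟨u, y₀, p.cons β, by simp only [Quiver.Path.length_cons]; omega⟩

lemma exists_path_from_s4 {V : Type} [Quiver V] (hns : NoSourcesOrSinks V) (v : V) (n : ℕ) :
    ∃ (w : V) (p : Quiver.Path v w), p.length = n := by
  induction n with
  | zero => exact ⟨v, Quiver.Path.nil, rfl⟩
  | succ n ih =>
    obtain ⟨w, p, hp⟩ := ih
    obtain ⟨z, ⟨e⟩⟩ := (hns w).2
    exact ⟨z, p.cons e, by rw [Quiver.Path.length_cons, hp]⟩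

lemma exists_path_to_s4 {V : Type} [Quiver V] (hns : NoSourcesOrSinks V) (v : V) (n : ℕ) :
    ∃ (w : V) (p : Quiver.Path w v), p.length = n := by
  induction n with
  | zero => exact ⟨v, Quiver.Path.nil, rfl⟩
  | succ n ih =>
    obtain ⟨w, p, hp⟩ := ih
    obtain ⟨z, ⟨e⟩⟩ := (hns w).1
    refine ⟨z, e.toPath.comp p, ?_⟩
    rw [Quiver.Path.length_comp, Quiver.Path.length_toPath, hp, add_comm]

/-- Sliding the window `p` by the length of `q` along `p * q`: the result is the remaining tail
`p₂` of `p` followed by `q`. -/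
lemma slide {V : Type} [Quiver V] {m : ℕ} {a v b : V} (p : Quiver.Path a v) (hp : p.length = m)
    (q : Quiver.Path v b) (hq : q.length ≤ m) :
    ∃ (c : V) (p₂ : Quiver.Path c v) (h : (p₂.comp q).length = m),
      Relation.EqvGen (SwapRel V m) ⟨a, v, p, hp⟩ ⟨c, b, p₂.comp q, h⟩ := by
  induction q with
  | nil => exact ⟨a, p, hp, Relation.EqvGen.refl _⟩
  | cons q β ih =>
    rw [Quiver.Path.length_cons] at hq
    obtain ⟨c, p₂, h, hr⟩ := ih (by omega)
    have h' := h
    rw [Quiver.Path.length_comp] at h'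
    obtain ⟨d, α, p₃, -, rfl⟩ :=
      p₂.eq_toPath_comp_of_length_eq_succ (n := p₂.length - 1) (by omega)
    have hlen : (p₃.comp q).length + 1 = m := by
      rw [Quiver.Path.length_comp, Quiver.Path.length_toPath] at h'
      rw [Quiver.Path.length_comp]
      omega
    refine ⟨d, p₃, hlen, hr.trans _ _ _ (Relation.EqvGen.rel _ _ ?_)⟩
    refine ⟨_, _, p₃.comp q, _, α, _, β, hlen, ?_, rfl⟩
    simp only [Quiver.Path.comp_assoc]

lemma eqv_of_tgt_eq_src {V : Type} [Quiver V] {m : ℕ} (x y : APath V m) (h : x.tgt = y.src) :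
    Relation.EqvGen (SwapRel V m) x y := by
  obtain ⟨a, v, p, hp⟩ := x
  obtain ⟨v', b, q, hq⟩ := y
  obtain rfl : v = v' := h
  obtain ⟨c, p₂, hl, hr⟩ := slide p hp q hq.le
  have h0 : p₂.length = 0 := by
    rw [Quiver.Path.length_comp] at hl
    omega
  obtain rfl := Quiver.Path.eq_of_length_zero p₂ h0
  obtain rfl := Quiver.Path.eq_nil_of_length_zero p₂ h0
  simpa only [Quiver.Path.nil_comp] using hr

lemma eqv_of_src_eq {V : Type} [Quiver V] (hns : NoSourcesOrSinks V) {m : ℕ} (x y : APath V m)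
    (h : x.src = y.src) : Relation.EqvGen (SwapRel V m) x y := by
  obtain ⟨w, p, hp⟩ := exists_path_to_s4 hns x.src m
  exact ((eqv_of_tgt_eq_src ⟨w, x.src, p, hp⟩ x rfl).symm).trans _ _ _
    (eqv_of_tgt_eq_src ⟨w, x.src, p, hp⟩ y h)

lemma eqv_of_arrow {V : Type} [Quiver V] (hns : NoSourcesOrSinks V) {m : ℕ} (hm : 1 ≤ m)
    {u v : V} (α : u ⟶ v) (x y : APath V m) (hx : x.src = u) (hy : y.src = v) :
    Relation.EqvGen (SwapRel V m) x y := by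
  obtain ⟨w, p, hp⟩ := exists_path_from_s4 hns v (m - 1)
  obtain ⟨z, ⟨β⟩⟩ := (hns w).2
  have hlen : p.length + 1 = m := by omega
  have hlen' : (α.toPath.comp p).length = m := by
    rw [Quiver.Path.length_comp, Quiver.Path.length_toPath]
    omega
  refine (eqv_of_src_eq hns x ⟨u, w, α.toPath.comp p, hlen'⟩ hx).trans _ _ _ ?_
  refine Relation.EqvGen.trans _ ⟨v, z, p.cons β, hlen⟩ _ (Relation.EqvGen.rel _ _ ?_)
    (eqv_of_src_eq hns _ y hy.symm)
  exact ⟨_, _, p, _, α, _, β, hlen, rfl, rfl⟩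

/-- Arrows of `Symmetrify V` may be traversed in both directions, so a path there is a walk in
the underlying undirected graph. -/
lemma eqv_of_zigzag {V : Type} [Quiver V] (hns : NoSourcesOrSinks V) {m : ℕ} (hm : 1 ≤ m)
    {u v : V} (p : @Quiver.Path (Symmetrify V) _ u v) :
    ∀ x y : APath V m, x.src = u → y.src = v → Relation.EqvGen (SwapRel V m) x y := by
  induction p with
  | nil => exact fun x y hx hy => eqv_of_src_eq hns x y (hx.trans hy.symm)
  | @cons b c p e ih =>
    intro x y hx hy
    obtain ⟨w, q, hq⟩ := exists_path_from_s4 (V := V) hns b m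
    refine (ih x ⟨b, w, q, hq⟩ hx rfl).trans _ _ _ ?_
    rcases e with e | e
    · exact eqv_of_arrow hns hm e _ y rfl hy
    · exact (eqv_of_arrow hns hm e y _ hy rfl).symm

/-- in a finite connected quiver without sources or sinks, the equivalence
relation generated by `∼` relates any two paths of length `m ≥ 1`. -/
theorem swapRel_eqvGen (V : Type) [Quiver V] [Fintype V] [∀ a b : V, Fintype (a ⟶ b)]
    (hconn : QuiverConnected V) (hns : NoSourcesOrSinks V)
    (m : ℕ) (hm : 1 ≤ m) (x y : APath V m) :
    Relation.EqvGen (SwapRel V m) x y := by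
  obtain ⟨-, hsub⟩ := hconn
  have h : (Quiver.WeaklyConnectedComponent.mk x.src) = Quiver.WeaklyConnectedComponent.mk y.src :=
    Subsingleton.elim _ _
  obtain ⟨p⟩ := (Quiver.WeaklyConnectedComponent.eq _ _).1 h
  exact eqv_of_zigzag hns hm p x y rfl rfl
end
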